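/- Let d, k, s be integers with 1 ≤ d ≤ k, and let P be a finite poset such that |P| − k·h(P) ≥ s (the k-surplus of P is at least s) and the deletion of no set of at most s/2 elements reduces the height of P. Then P contains at least 2^d antichains with k+1 elements or at least 2^{⌊s/(2d)⌋} chains of length h(P). -/

import Mathlib

/-!
Assume there are fewer than `2 ^ d` antichains of size `k + 1`; the chains are found by induction
on `L`, where the surplus is at least `2dL` and no `dL` deletions reduce the height.

Grade a subset `Q` by `lev`, the largest size of a chain strictly below an element, so that the
level sets are antichains, and let `A` be the lowest level, say level `i`, with more than `k`
elements. It has at most `k + d` elements, since otherwise it already contains `2 ^ d` antichains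
of size `k + 1`. Call an element of level `i + 1` *bad* if at most one element of `A` lies
below it. There are fewer than `d` bad elements: given a set `B` of `d` of them, every `S ⊆ B`
can be completed to an antichain `S ∪ (A \ {elements below S})` of size at least `|A| ≥ k + 1`,
and a subset of size `k + 1` containing `S` still determines `S` (`two_pow_le_antichains`).

Now discard the levels up to `i` and the bad elements. The height drops by exactly `i + 1`, the
surplus drops by at most `2d`, and `d` fewer deletions are allowed, so by induction the remaining
set has `2 ^ (L - 1)` maximum chains. The least element of each one has level `i + 1` and is
not bad, so the chain extends downwards through each of at least two elements
of `A` (`exists_two_extensions`), which doubles the number of chains.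
-/

namespace Surplus

open Finset Classical

variable {P : Type*} [PartialOrder P]

/-! ### Chains, antichains and levels -/

/-- The antichains of `P` with `n` elements. -/
noncomputable def antichains (P : Type*) [Fintype P] [PartialOrder P] (n : ℕ) :
    Finset (Finset P) :=
  univ.filter fun t => t.card = n ∧ IsAntichain (· ≤ ·) (t : Set P)

/-- The chains with `n` elements that are contained in `Q`. -/
noncomputable def chains (Q : Finset P) (n : ℕ) : Finset (Finset P) :=
  Q.powerset.filter fun c => c.card = n ∧ IsChain (· ≤ ·) (c : Set P)

/-- The chains in `Q` lying strictly below `x`. -/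
noncomputable def below (Q : Finset P) (x : P) : Finset (Finset P) :=
  Q.powerset.filter fun c => IsChain (· ≤ ·) (c : Set P) ∧ ∀ y ∈ c, y < x

/-- The level of `x` with respect to `Q`: the largest size of a chain in `Q` strictly below `x`.
Minimal elements have level `0`. -/
noncomputable def lev (Q : Finset P) (x : P) : ℕ := (below Q x).sup card

lemma mem_chains {Q c : Finset P} {n : ℕ} :
    c ∈ chains Q n ↔ c ⊆ Q ∧ c.card = n ∧ IsChain (· ≤ ·) (c : Set P) := by
  simp [chains]

lemma mem_below {Q c : Finset P} {x : P} :
    c ∈ below Q x ↔ c ⊆ Q ∧ IsChain (· ≤ ·) (c : Set P) ∧ ∀ y ∈ c, y < x := by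
  simp [below]

lemma card_le_lev {Q c : Finset P} {x : P} (h : c ∈ below Q x) : c.card ≤ lev Q x :=
  le_sup (f := card) h

lemma exists_card_eq_lev (Q : Finset P) (x : P) : ∃ c ∈ below Q x, c.card = lev Q x := by
  obtain ⟨c, hc, h⟩ := exists_mem_eq_sup (below Q x) ⟨∅, by simp [mem_below]⟩ card
  exact ⟨c, hc, h.symm⟩

/-- A chain above `x` extends downwards through `x` by `lev Q x` further elements. -/
lemma exists_extension {Q c : Finset P} {x : P} (hcQ : c ⊆ Q)
    (hc : IsChain (· ≤ ·) (c : Set P)) (hx : x ∈ Q) (hxc : ∀ y ∈ c, x < y) :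
    ∃ e ∈ chains Q (c.card + lev Q x + 1), c ⊆ e ∧ x ∈ e ∧ ∀ z ∈ e, z ∈ c ∨ z = x ∨ z < x := by
  obtain ⟨b, hb, hbc⟩ := exists_card_eq_lev Q x
  obtain ⟨hbQ, hb, hbx⟩ := mem_below.1 hb
  have hxb : x ∉ b := fun h => lt_irrefl _ (hbx x h)
  refine ⟨c ∪ insert x b, mem_chains.2 ⟨?_, ?_, ?_⟩, ?_, ?_, ?_⟩
  · grind
  · rw [card_union_of_disjoint, card_insert_of_notMem hxb, hbc]
    · ring
    · rw [disjoint_left]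
      intro y hy hy'
      have h1 := hxc y hy
      rcases mem_insert.1 hy' with rfl | h
      · exact lt_irrefl _ h1
      · exact lt_irrefl _ (h1.trans (hbx y h))
  · intro u hu v hv huv
    simp only [coe_union, coe_insert, Set.mem_union, Set.mem_insert_iff, mem_coe] at hu hv
    rcases hu with hu | rfl | hu <;> rcases hv with hv | rfl | hv
    · exact hc hu hv huv
    · exact Or.inr (hxc u hu).le
    · exact Or.inr ((hbx v hv).trans (hxc u hu)).le
    · exact Or.inl (hxc v hv).le
    · exact absurd rfl huv
    · exact Or.inr (hbx v hv).le
    · exact Or.inl ((hbx u hu).trans (hxc v hv)).le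
    · exact Or.inl (hbx u hu).le
    · exact hb hu hv huv
  · exact subset_union_left
  · simp
  · intro z hz
    rcases mem_union.1 hz with h | h
    · exact Or.inl h
    · rcases mem_insert.1 h with h | h
      · exact Or.inr (Or.inl h)
      · exact Or.inr (Or.inr (hbx z h))

lemma lev_lt_lev {Q : Finset P} {x y : P} (hx : x ∈ Q) (hxy : x < y) : lev Q x < lev Q y := by
  obtain ⟨e, he, -, -, hz⟩ := exists_extension (c := ∅) (x := x) (by simp) (by simp) hx (by simp)
  obtain ⟨h1, h2, h3⟩ := mem_chains.1 he
  have : e.card ≤ lev Q y := card_le_lev (mem_below.2 ⟨h1, h3, fun z hze => by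
    rcases hz z hze with h | rfl | h
    · simp at h
    · exact hxy
    · exact h.trans hxy⟩)
  simp at h2
  omega

lemma exists_least {c : Finset P} (hc : IsChain (· ≤ ·) (c : Set P)) (hne : c.Nonempty) :
    ∃ y ∈ c, ∀ z ∈ c, y ≤ z := by
  obtain ⟨y, hy⟩ := c.exists_minimal hne
  refine ⟨y, hy.prop, fun z hz => ?_⟩
  rcases hc.total hy.prop hz with h | h
  · exact h
  · exact hy.le_of_le hz h

lemma exists_greatest {c : Finset P} (hc : IsChain (· ≤ ·) (c : Set P)) (hne : c.Nonempty) :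
    ∃ y ∈ c, ∀ z ∈ c, z ≤ y := by
  obtain ⟨y, hy⟩ := c.exists_maximal hne
  refine ⟨y, hy.prop, fun z hz => ?_⟩
  rcases hc.total hy.prop hz with h | h
  · exact hy.le_of_ge hz h
  · exact h

lemma exists_lev_eq {Q : Finset P} {y : P} {i : ℕ} (hy : lev Q y = i + 1) :
    ∃ x ∈ Q, lev Q x = i ∧ x < y := by
  obtain ⟨b, hb, hbc⟩ := exists_card_eq_lev Q y
  obtain ⟨hbQ, hb, hby⟩ := mem_below.1 hb
  obtain ⟨x, hx, hmax⟩ := exists_greatest hb (card_pos.1 (by omega))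
  have h1 := lev_lt_lev (hbQ hx) (hby x hx)
  have h2 : (b.erase x).card ≤ lev Q x := card_le_lev (mem_below.2
    ⟨(erase_subset _ _).trans hbQ, hb.mono (by simp), fun z hz =>
      lt_of_le_of_ne (hmax z (mem_of_mem_erase hz)) (ne_of_mem_erase hz)⟩)
  rw [card_erase_of_mem hx] at h2
  exact ⟨x, hbQ hx, by omega, hby x hx⟩

/-- A chain with least element `y` can be prolonged below `y` by `lev Q y` elements. -/
lemma card_add_lev_le {Q c : Finset P} {h : ℕ} {y : P}
    (hh : ∀ c ⊆ Q, IsChain (· ≤ ·) (c : Set P) → c.card ≤ h)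
    (hcQ : c ⊆ Q) (hc : IsChain (· ≤ ·) (c : Set P)) (hy : y ∈ c) (hmin : ∀ z ∈ c, y ≤ z) :
    c.card + lev Q y ≤ h := by
  obtain ⟨e, he, -⟩ := exists_extension (c := c.erase y) (x := y)
    ((erase_subset _ _).trans hcQ) (hc.mono (by simp)) (hcQ hy)
    (fun z hz => lt_of_le_of_ne (hmin z (mem_of_mem_erase hz)) (ne_of_mem_erase hz).symm)
  obtain ⟨h1, h2, h3⟩ := mem_chains.1 he
  have := hh e h1 h3
  have := card_erase_add_one hy
  omega

lemma lev_lt {Q : Finset P} {h : ℕ} {y : P}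
    (hh : ∀ c ⊆ Q, IsChain (· ≤ ·) (c : Set P) → c.card ≤ h) (hy : y ∈ Q) : lev Q y < h := by
  have := card_add_lev_le (c := {y}) (y := y) hh (by simpa) (by simp) (by simp) (by simp)
  simp at this
  omega

lemma card_lev_lt_le {Q : Finset P} {k n : ℕ}
    (hk : ∀ j < n, (Q.filter fun x => lev Q x = j).card ≤ k) :
    (Q.filter fun x => lev Q x < n).card ≤ k * n := by
  rw [card_eq_sum_card_fiberwise (f := lev Q) (t := range n) (by intro x; simp)]
  calc _ ≤ ∑ j ∈ range n, k := by
        refine sum_le_sum fun j hj => (card_le_card ?_).trans (hk j (mem_range.1 hj))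
        intro x
        simp only [mem_filter]
        tauto
    _ = k * n := by simp [mul_comm]

/-! ### Families of antichains -/

/-- If every `S ⊆ B` is the trace on `B` of an antichain with at least `k + 1` elements, then
passing to a subset of size `k + 1` that contains `S` encodes `S` injectively. -/
lemma two_pow_le_antichains [Fintype P] {d k : ℕ} (hdk : d ≤ k) {B : Finset P}
    (hB : B.card = d)
    (H : ∀ S ⊆ B, ∃ U : Finset P, IsAntichain (· ≤ ·) (U : Set P) ∧ U ∩ B = S ∧ k + 1 ≤ U.card) :
    2 ^ d ≤ (antichains P (k + 1)).card := by
  have H' : ∀ S, ∃ t : Finset P, S ∈ B.powerset → t ∈ antichains P (k + 1) ∧ t ∩ B = S := by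
    intro S
    by_cases hS : S ∈ B.powerset
    · rw [mem_powerset] at hS
      obtain ⟨U, hU, hUB, hUc⟩ := H S hS
      have := card_le_card hS
      obtain ⟨t, hSt, htU, htc⟩ := exists_subsuperset_card_eq
        (show S ⊆ U from hUB ▸ inter_subset_left) (show S.card ≤ k + 1 by omega) hUc
      refine ⟨t, fun _ => ⟨?_, ?_⟩⟩
      · simp only [antichains, mem_filter, mem_univ, true_and]
        exact ⟨htc, hU.subset (by exact_mod_cast htU)⟩
      · grind
    · exact ⟨∅, fun h => absurd h hS⟩
  choose t ht using H'
  rw [← hB, ← card_powerset]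
  refine card_le_card_of_injOn t (fun S hS => (ht S hS).1) ?_
  intro S hS T hT hST
  rw [← (ht S hS).2, ← (ht T hT).2, hST]

lemma card_le_of_isAntichain [Fintype P] {d k : ℕ} (hdk : d ≤ k)
    (hA : (antichains P (k + 1)).card < 2 ^ d)
    {A : Finset P} (hAa : IsAntichain (· ≤ ·) (A : Set P)) : A.card ≤ k + d := by
  by_contra! hc
  obtain ⟨B, hBA, hB⟩ := exists_subset_card_eq (show d ≤ A.card by omega)
  refine absurd (two_pow_le_antichains hdk hB fun S hS => ⟨S ∪ (A \ B), ?_, ?_, ?_⟩) (by omega)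
  · exact hAa.subset (by
      have : S ∪ (A \ B) ⊆ A := by grind
      exact_mod_cast this)
  · grind
  · have h1 : (A \ B).card ≤ (S ∪ (A \ B)).card := card_le_card subset_union_right
    rw [card_sdiff_of_subset hBA] at h1
    omega

/-- Fewer than `d` elements of the antichain `E` have at most one element of the antichain `A`
below them: exchanging elements of `E` for the elements of `A` below them yields too many
antichains otherwise. -/
lemma card_bad_lt [Fintype P] {d k : ℕ} (hdk : d ≤ k)
    (hA : (antichains P (k + 1)).card < 2 ^ d)
    {A E : Finset P} (hAa : IsAntichain (· ≤ ·) (A : Set P)) (hAc : k + 1 ≤ A.card)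
    (hEa : IsAntichain (· ≤ ·) (E : Set P)) (hAE : ∀ a ∈ A, ∀ b ∈ E, ¬ b ≤ a)
    (hE : ∀ b ∈ E, (A.filter (· < b)).card ≤ 1) : E.card < d := by
  by_contra! hc
  obtain ⟨B, hBE, hB⟩ := exists_subset_card_eq hc
  refine absurd (two_pow_le_antichains hdk hB fun S hS =>
    ⟨S ∪ (A \ S.biUnion fun b => A.filter (· < b)), ?_, ?_, ?_⟩) (by omega)
  · intro u hu v hv huv huv'
    simp only [coe_union, coe_sdiff, Set.mem_union, mem_coe, Set.mem_sdiff, mem_biUnion,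
      mem_filter, not_exists, not_and] at hu hv
    rcases hu with hu | ⟨hu, hu'⟩ <;> rcases hv with hv | ⟨hv, hv'⟩
    · exact hEa (hBE (hS hu)) (hBE (hS hv)) huv huv'
    · exact hAE v hv u (hBE (hS hu)) huv'
    · exact hu' v hv hu (lt_of_le_of_ne huv' huv)
    · exact hAa hu hv huv huv'
  · ext z
    simp only [mem_inter, mem_union, mem_sdiff]
    constructor
    · rintro ⟨h | h, hz⟩
      · exact h
      · exact absurd le_rfl (hAE z h.1 z (hBE hz))
    · exact fun h => ⟨Or.inl h, hS h⟩
  · have h1 : (S.biUnion fun b => A.filter (· < b)).card ≤ S.card * 1 :=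
      card_biUnion_le_card_mul _ _ _ fun b hb => hE b (hBE (hS hb))
    have h2 := le_card_sdiff (S.biUnion fun b => A.filter (· < b)) A
    rw [card_union_of_disjoint]
    · omega
    · rw [disjoint_left]
      intro z hz hz'
      exact hAE z (mem_sdiff.1 hz').1 z (hBE (hS hz)) le_rfl

lemma isAntichain_lev (Q : Finset P) (i : ℕ) :
    IsAntichain (· ≤ ·) ((Q.filter fun x => lev Q x = i : Finset P) : Set P) := by
  intro u hu v hv huv huv'
  simp only [coe_filter, Set.mem_ofPred_eq] at hu hv
  have := lev_lt_lev hu.1 (lt_of_le_of_ne huv' huv)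
  omega

/-! ### Doubling the number of maximum chains -/

/-- A chain that misses the levels up to `i` and has the largest possible length `h - (i + 1)`
has two extensions to a maximum chain, provided that none of its elements of level `i + 1` has at
most one element of level `i` below it. The chain is recovered from either extension by discarding
the levels up to `i`. -/
lemma exists_two_extensions {Q c : Finset P} {h i : ℕ} (hih : i + 1 < h)
    (hh : ∀ c ⊆ Q, IsChain (· ≤ ·) (c : Set P) → c.card ≤ h)
    (hcQ : c ⊆ Q) (hc : IsChain (· ≤ ·) (c : Set P)) (hcc : c.card = h - (i + 1))
    (hlev : ∀ z ∈ c, i < lev Q z)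
    (hgood : ∀ z ∈ c, lev Q z = i + 1 →
      1 < ((Q.filter fun x => lev Q x = i).filter (· < z)).card) :
    ∃ e : Bool → Finset P, (∀ b, e b ∈ chains Q h ∧ (e b).filter (i < lev Q ·) = c) ∧
      e true ≠ e false := by
  obtain ⟨y, hy, hmin⟩ := exists_least hc (card_pos.1 (by omega))
  have h1 := card_add_lev_le hh hcQ hc hy hmin
  have h2 := hlev y hy
  obtain ⟨x₁, hx₁, x₂, hx₂, hne⟩ := one_lt_card.1 (hgood y hy (by omega))
  have ext : ∀ x, x ∈ (Q.filter fun x => lev Q x = i).filter (· < y) →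
      ∃ e ∈ chains Q h, c ⊆ e ∧ x ∈ e ∧ ∀ z ∈ e, z ∈ c ∨ z = x ∨ lev Q z < i := by
    intro x hx
    simp only [mem_filter] at hx
    obtain ⟨⟨hxQ, hxi⟩, hxy⟩ := hx
    obtain ⟨e, he, hce, hxe, hz⟩ := exists_extension hcQ hc hxQ
      (fun z hz => hxy.trans_le (hmin z hz))
    rw [show c.card + lev Q x + 1 = h by omega] at he
    refine ⟨e, he, hce, hxe, fun z hze => ?_⟩
    rcases hz z hze with h | h | h
    · exact Or.inl h
    · exact Or.inr (Or.inl h)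
    · exact Or.inr (Or.inr (hxi ▸ lev_lt_lev ((mem_chains.1 he).1 hze) h))
  obtain ⟨e₁, he₁, hce₁, hxe₁, hz₁⟩ := ext x₁ hx₁
  obtain ⟨e₂, he₂, hce₂, hxe₂, hz₂⟩ := ext x₂ hx₂
  simp only [mem_filter] at hx₁ hx₂
  refine ⟨fun b => if b then e₁ else e₂, ?_, ?_⟩
  · intro b
    cases b
    · refine ⟨by simpa using he₂, ?_⟩
      ext z
      simp
      grind
    · refine ⟨by simpa using he₁, ?_⟩
      ext z
      simp
      grind
  · simp
    rintro rfl
    rcases hz₂ x₁ hxe₁ with h | h | h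
    · have := hlev x₁ h
      omega
    · exact hne h
    · omega

/-- The statement by induction on `L`: each step discards the levels of `Q` up to the lowest one
with more than `k` elements, together with the bad elements of the next level. -/
theorem two_pow_le_chains [Fintype P] {d k : ℕ} (hd : 1 ≤ d) (hdk : d ≤ k)
    (hA : (antichains P (k + 1)).card < 2 ^ d) (L : ℕ) :
    ∀ (Q : Finset P) (h : ℕ), (∀ c ⊆ Q, IsChain (· ≤ ·) (c : Set P) → c.card ≤ h) →
      k * h + 2 * d * L ≤ Q.card →
      (∀ X : Finset P, X.card ≤ d * L → ∃ c ∈ chains Q h, Disjoint c X) →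
      2 ^ L ≤ (chains Q h).card := by
  induction L with
  | zero =>
    intro Q h _ _ hdel
    obtain ⟨c, hc, -⟩ := hdel ∅ (by simp)
    exact card_pos.2 ⟨c, hc⟩
  | succ L ih =>
    intro Q h hh hs hdel
    have hex : ∃ i, k < (Q.filter fun x => lev Q x = i).card := by
      by_contra! hcon
      have h1 := card_lev_lt_le (Q := Q) (k := k) (n := h) fun j _ => hcon j
      rw [filter_true_of_mem fun x hx => lev_lt hh hx] at h1
      nlinarith
    obtain ⟨i, hi, hmin⟩ : ∃ i, k < (Q.filter fun x => lev Q x = i).card ∧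
        ∀ j < i, (Q.filter fun x => lev Q x = j).card ≤ k :=
      ⟨Nat.find hex, Nat.find_spec hex, fun j hj => not_lt.1 (Nat.find_min hex hj)⟩
    set A := Q.filter fun x => lev Q x = i with hAdef
    set E := (Q.filter fun x => lev Q x = i + 1).filter
      fun b => (A.filter (· < b)).card ≤ 1 with hEdef
    have hAc : A.card ≤ k + d := card_le_of_isAntichain hdk hA (isAntichain_lev Q i)
    have hEc : E.card < d := by
      refine card_bad_lt hdk hA (isAntichain_lev Q i) hi
        ((isAntichain_lev Q (i + 1)).subset (by exact_mod_cast filter_subset _ _)) ?_ ?_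
      · intro a ha b hb hba
        simp only [hAdef, hEdef, mem_filter] at ha hb
        rcases hba.eq_or_lt with rfl | hlt
        · omega
        · have := lev_lt_lev hb.1.1 hlt
          omega
      · intro b hb
        exact (mem_filter.1 hb).2
    set Q₁ := Q.filter (i < lev Q ·) with hQ₁
    have hcard : Q.card ≤ k * i + (k + d) + Q₁.card := by
      have h1 := card_lev_lt_le hmin
      have h2 : Q ⊆ (Q.filter fun x => lev Q x < i) ∪ A ∪ Q₁ := by
        intro x hx
        simp only [hAdef, hQ₁, mem_union, mem_filter]
        have := lt_trichotomy (lev Q x) i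
        tauto
      have h3 := card_le_card h2
      have h4 := card_union_le ((Q.filter fun x => lev Q x < i) ∪ A) Q₁
      have h5 := card_union_le (Q.filter fun x => lev Q x < i) A
      omega
    have hih : i < h := by
      obtain ⟨x, hx⟩ := card_pos.1 (show 0 < A.card by omega)
      rw [hAdef, mem_filter] at hx
      exact hx.2 ▸ lev_lt hh hx.1
    obtain ⟨m, rfl⟩ : ∃ m, h = m + (i + 1) := ⟨h - (i + 1), by omega⟩
    have hQ₁c : k * m + 2 * d * L + d ≤ Q₁.card := by
      have h1 : k * (m + (i + 1)) = k * m + k * i + k := by ring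
      have h2 : 2 * d * (L + 1) = 2 * d * L + 2 * d := by ring
      omega
    have hm : 0 < m := by
      obtain ⟨x, hx⟩ := card_pos.1 (show 0 < Q₁.card by omega)
      rw [hQ₁, mem_filter] at hx
      have := lev_lt hh hx.1
      omega
    have hQ' : Q₁ \ E ⊆ Q := sdiff_subset.trans (filter_subset _ _)
    have hlevQ' : ∀ x ∈ Q₁ \ E, i < lev Q x := fun x hx =>
      (mem_filter.1 (mem_sdiff.1 hx).1).2
    have hh' : ∀ c ⊆ Q₁ \ E, IsChain (· ≤ ·) (c : Set P) → c.card ≤ m := by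
      intro c hc hcc
      rcases c.eq_empty_or_nonempty with rfl | hne
      · simp
      obtain ⟨y, hy, hmy⟩ := exists_least hcc hne
      have h1 := card_add_lev_le hh (hc.trans hQ') hcc hy hmy
      have h2 := hlevQ' y (hc hy)
      omega
    have key := ih (Q₁ \ E) m hh' (by
        have := le_card_sdiff E Q₁
        omega) (by
      intro X hX
      obtain ⟨c, hc, hcX⟩ := hdel (X ∪ E) (by
        have := card_union_le X E
        have : d * (L + 1) = d * L + d := by ring
        omega)
      obtain ⟨hcQ, hcc, hch⟩ := mem_chains.1 hc
      rw [disjoint_union_right] at hcX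
      have hsub : c.filter (i < lev Q ·) ⊆ Q₁ \ E := by
        intro x hx
        obtain ⟨hx1, hx2⟩ := mem_filter.1 hx
        exact mem_sdiff.2 ⟨mem_filter.2 ⟨hcQ hx1, hx2⟩, disjoint_left.1 hcX.2 hx1⟩
      have hch' : IsChain (· ≤ ·) ((c.filter (i < lev Q ·) : Finset P) : Set P) :=
        hch.mono (by exact_mod_cast filter_subset _ _)
      -- A chain meets every level at most once, so at most `i + 1` elements are discarded.
      have hlow : (c.filter (¬ i < lev Q ·)).card ≤ (range (i + 1)).card := by
        refine card_le_card_of_injOn (lev Q) ?_ ?_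
        · intro x hx
          simp at hx ⊢
          omega
        · intro x hx y hy hxy
          simp only [coe_filter, Set.mem_ofPred_eq] at hx hy
          by_contra hne
          rcases hch hx.1 hy.1 hne with h | h
          · exact (lev_lt_lev (hcQ hx.1) (lt_of_le_of_ne h hne)).ne hxy
          · exact (lev_lt_lev (hcQ hy.1) (lt_of_le_of_ne h (Ne.symm hne))).ne hxy.symm
      have hsum := card_filter_add_card_filter_not (s := c) (i < lev Q ·)
      rw [card_range] at hlow
      refine ⟨c.filter (i < lev Q ·), mem_chains.2 ⟨hsub, ?_, hch'⟩,
        hcX.1.mono_left (filter_subset _ _)⟩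
      have := hh' _ hsub hch'
      omega)
    have hext : ∀ c, ∃ e : Bool → Finset P, c ∈ chains (Q₁ \ E) m →
        (∀ b, e b ∈ chains Q (m + (i + 1)) ∧ (e b).filter (i < lev Q ·) = c) ∧
        e true ≠ e false := by
      intro c
      by_cases hc : c ∈ chains (Q₁ \ E) m
      · obtain ⟨hcQ, hcc, hch⟩ := mem_chains.1 hc
        obtain ⟨e, he⟩ := exists_two_extensions (i := i) (by omega) hh (hcQ.trans hQ') hch
          (by omega) (fun z hz => hlevQ' z (hcQ hz)) (by
            intro z hz hzl
            by_contra! hcon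
            exact (mem_sdiff.1 (hcQ hz)).2
              (mem_filter.2 ⟨mem_filter.2 ⟨hQ' (hcQ hz), hzl⟩, hcon⟩))
        exact ⟨e, fun _ => he⟩
      · exact ⟨fun _ => ∅, fun h => absurd h hc⟩
    choose e he using hext
    have hfin : (chains (Q₁ \ E) m ×ˢ (univ : Finset Bool)).card ≤
        (chains Q (m + (i + 1))).card := by
      refine card_le_card_of_injOn (fun p => e p.1 p.2) ?_ ?_
      · intro p hp
        exact ((he p.1 (mem_product.1 hp).1).1 p.2).1
      · rintro ⟨c, b⟩ hp ⟨c', b'⟩ hp' heq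
        have hc := he c (mem_product.1 hp).1
        have hc' := he c' (mem_product.1 hp').1
        simp only at heq
        have hcc : c = c' := by rw [← (hc.1 b).2, ← (hc'.1 b').2, heq]
        subst hcc
        have hne := hc.2
        cases b <;> cases b' <;> simp_all
    rw [card_product, card_univ, Fintype.card_bool] at hfin
    rw [pow_succ]
    omega

end Surplus


/-- Posets with `k`-surplus at least `s` in which no deletion of at most `s/2` elements
reduces the height contain at least `2^d` antichains with `k+1` elements or at least
`2^⌊s/(2d)⌋` chains of maximum length, for any `1 ≤ d ≤ k`. -/
theorem stmt_7 {P : Type*} [Fintype P] [PartialOrder P] (d k s h : ℕ)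
    (hd : 1 ≤ d) (hdk : d ≤ k)
    (hh : (∃ c : Finset P, c.card = h ∧ IsChain (· ≤ ·) (↑c : Set P)) ∧
      ∀ c : Finset P, IsChain (· ≤ ·) (↑c : Set P) → c.card ≤ h)
    (hs : (s : ℤ) ≤ (Fintype.card P : ℤ) - (k : ℤ) * (h : ℤ))
    (hdel : ∀ X : Finset P, 2 * X.card ≤ s →
      ∃ c : Finset P, c.card = h ∧ IsChain (· ≤ ·) (↑c : Set P) ∧ Disjoint (↑c : Set P) (↑X : Set P)) :
    2 ^ d ≤ Set.ncard
        {t : Finset P | t.card = k + 1 ∧ IsAntichain (· ≤ ·) (↑t : Set P)} ∨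
      2 ^ (s / (2 * d)) ≤ Set.ncard
        {c : Finset P | c.card = h ∧ IsChain (· ≤ ·) (↑c : Set P)} := by
  classical
  have eA : {t : Finset P | t.card = k + 1 ∧ IsAntichain (· ≤ ·) (↑t : Set P)} =
      (Surplus.antichains P (k + 1) : Set (Finset P)) := by
    ext t
    simp [Surplus.antichains]
  have eC : {c : Finset P | c.card = h ∧ IsChain (· ≤ ·) (↑c : Set P)} =
      (Surplus.chains (Finset.univ : Finset P) h : Set (Finset P)) := by
    ext c
    simp [Surplus.mem_chains]
  rw [eA, eC, Set.ncard_coe_finset, Set.ncard_coe_finset, or_iff_not_imp_left, not_le]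
  intro hA
  have hL : 2 * d * (s / (2 * d)) ≤ s := Nat.mul_div_le s (2 * d)
  refine Surplus.two_pow_le_chains hd hdk hA _ Finset.univ h (fun c _ hc => hh.2 c hc) ?_ ?_
  · rw [Finset.card_univ]
    zify at hL ⊢
    linarith
  · intro X hX
    obtain ⟨c, hc, hch, hcX⟩ := hdel X (by nlinarith)
    exact ⟨c, Surplus.mem_chains.2 ⟨Finset.subset_univ c, hc, hch⟩, by exact_mod_cast hcX⟩
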